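/- Let A be an n × n matrix with real entries, regarded also as a complex matrix via entrywise inclusion ℝ ↪ ℂ, and let x₀ ∈ ℝⁿ. Let p, q be polynomials with real coefficients, q monic of degree k = 2m, deg p ≤ k, such that over ℂ the roots of q are θ₁, …, θ_m together with their conjugates θ̄₁, …, θ̄_m, all 2m pairwise distinct. Assume that for each j the complex matrix A − θⱼ·I is invertible. Then: (i) the complex matrix A − θ̄ⱼ·I is invertible for each j, (ii) the matrix q(A) (evaluation of q at A) is invertible, and (iii) the real vector q(A)⁻¹ p(A) x₀ satisfies q(A)⁻¹ p(A) x₀ = α₀ x₀ + 2 · Re( Σ_{j=1}^{m} αⱼ · (A − θⱼ·I)⁻¹ x₀ ), where α₀ is the coefficient of X^k in p, αⱼ = p(θⱼ)/q'(θⱼ) ∈ ℂ, the inverses and scalar multiplications on the right-hand side are taken over ℂ, and Re is applied entrywise. -/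

import Mathlib

open Polynomial Matrix

/-!
For distinct nodes `vᵢ` with nodal polynomial `Q = ∏ (X - vᵢ)`, the difference between `P` and
its coefficient of `X ^ deg Q` times `Q` has degree below `deg Q`, so Lagrange interpolation writes
it as `∑ (P(vᵢ) / Q'(vᵢ)) ∏_{j ≠ i} (X - vⱼ)`. Evaluating at `b` and cancelling `Q(b)` turns each
product into `(b - vᵢ)⁻¹`. For a real matrix and real polynomials, complex conjugation exchanges the
terms at `θⱼ` and its conjugate, so each pair contributes twice a real part.
-/

/-- The residue `p(z) / q'(z)` of the rational function `p / q` at a simple root `z` of `q`; at a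
multiple root it takes the junk value `0`. -/
noncomputable def simplePoleResidue {K : Type*} [Field K] (p q : K[X]) (z : K) : K :=
  p.eval z / (derivative q).eval z

section PartialFractions

open scoped Ring

lemma degree_sub_C_coeff_mul_lt {R : Type*} [Ring R] {p q : R[X]} (hq : q.Monic)
    (hpq : p.natDegree ≤ q.natDegree) :
    (p - C (p.coeff q.natDegree) * q).degree < q.natDegree := by
  rw [degree_lt_iff_coeff_zero]
  intro k hk
  rw [coeff_sub, coeff_C_mul]
  rcases hk.eq_or_lt with rfl | hk
  · rw [hq.coeff_natDegree, mul_one, sub_self]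
  · rw [coeff_eq_zero_of_natDegree_lt (hpq.trans_lt hk), coeff_eq_zero_of_natDegree_lt hk,
      mul_zero, sub_zero]

lemma nodal_sumElim {R ι : Type*} [CommRing R] [Fintype ι] (v w : ι → R) :
    Lagrange.nodal Finset.univ (Sum.elim v w) = ∏ i, ((X - C (v i)) * (X - C (w i))) := by
  simp only [Lagrange.nodal_eq, Fintype.prod_sum_type, Finset.prod_mul_distrib, Sum.elim_inl,
    Sum.elim_inr]

variable {K R ι : Type*} [Ring R] {b : R} {s : Finset ι} {v : ι → K}

section CommRing

variable [CommRing K] [Algebra K R]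

lemma isUnit_aeval_nodal (hb : ∀ i ∈ s, IsUnit (b - algebraMap K R (v i))) :
    IsUnit (aeval b (Lagrange.nodal s v)) := by
  classical
  induction s using Finset.induction_on with
  | empty => simp only [Lagrange.nodal_empty, map_one, isUnit_one]
  | insert i s hi ih =>
    rw [Finset.forall_mem_insert] at hb
    rw [Lagrange.nodal_insert_eq_nodal hi, map_mul, map_sub, aeval_X, aeval_C]
    exact hb.1.mul (ih hb.2)

lemma inverse_aeval_nodal_mul_aeval_nodal_erase [DecidableEq ι]
    (hb : ∀ i ∈ s, IsUnit (b - algebraMap K R (v i))) {i : ι} (hi : i ∈ s) :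
    (aeval b (Lagrange.nodal s v))⁻¹ʳ * aeval b (Lagrange.nodal (s.erase i) v) =
      (b - algebraMap K R (v i))⁻¹ʳ := by
  have herase : IsUnit (aeval b (Lagrange.nodal (s.erase i) v)) :=
    isUnit_aeval_nodal fun j hj => hb j (Finset.mem_of_mem_erase hj)
  have hsplit : aeval b (Lagrange.nodal s v) =
      aeval b (Lagrange.nodal (s.erase i) v) * (b - algebraMap K R (v i)) := by
    rw [Lagrange.nodal_eq_mul_nodal_erase hi, mul_comm, map_mul, map_sub, aeval_X, aeval_C]
  rw [hsplit, Ring.inverse_mul (.inl herase), mul_assoc, Ring.inverse_mul_cancel _ herase,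
    mul_one]

end CommRing

variable [Field K] [Algebra K R]

lemma interpolate_eval_eq_sum_residue_mul_nodal_erase [DecidableEq ι] (p : K[X]) :
    Lagrange.interpolate s v (fun i => p.eval (v i)) =
      ∑ i ∈ s, C (simplePoleResidue p (Lagrange.nodal s v) (v i)) *
        Lagrange.nodal (s.erase i) v := by
  rw [Lagrange.interpolate_apply]
  refine Finset.sum_congr rfl fun i hi => ?_
  rw [Lagrange.basis_eq_prod_sub_inv_mul_nodal_div hi, ← Lagrange.nodal_erase_eq_nodal_div hi,
    Lagrange.nodalWeight_eq_eval_derivative_nodal hi, ← mul_assoc, ← C_mul, ← div_eq_mul_inv,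
    simplePoleResidue]

theorem eq_C_coeff_mul_nodal_add_sum_residue_mul_nodal_erase [DecidableEq ι]
    (hv : Set.InjOn v s) {p : K[X]} (hp : p.natDegree ≤ s.card) :
    p = C (p.coeff s.card) * Lagrange.nodal s v +
      ∑ i ∈ s, C (simplePoleResidue p (Lagrange.nodal s v) (v i)) *
        Lagrange.nodal (s.erase i) v := by
  have hdeg : (p - C (p.coeff s.card) * Lagrange.nodal s v).degree < s.card := by
    simpa only [Lagrange.natDegree_nodal] using
      degree_sub_C_coeff_mul_lt (Lagrange.nodal_monic (s := s) (v := v))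
        (hp.trans_eq Lagrange.natDegree_nodal.symm)
  rw [← sub_eq_iff_eq_add', ← interpolate_eval_eq_sum_residue_mul_nodal_erase]
  refine Lagrange.eq_interpolate_of_eval_eq _ hv hdeg fun i hi => ?_
  rw [eval_sub, eval_mul, Lagrange.eval_nodal_at_node hi, mul_zero, sub_zero]

theorem inverse_aeval_nodal_mul_aeval (hv : Set.InjOn v s)
    (hb : ∀ i ∈ s, IsUnit (b - algebraMap K R (v i))) {p : K[X]} (hp : p.natDegree ≤ s.card) :
    (aeval b (Lagrange.nodal s v))⁻¹ʳ * aeval b p =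
      p.coeff s.card • 1 +
        ∑ i ∈ s, simplePoleResidue p (Lagrange.nodal s v) (v i) •
          (b - algebraMap K R (v i))⁻¹ʳ := by
  classical
  conv_lhs => rw [eq_C_coeff_mul_nodal_add_sum_residue_mul_nodal_erase hv hp]
  simp only [← smul_eq_C_mul, map_add, map_sum, map_smul, mul_add, Finset.mul_sum, mul_smul_comm]
  rw [Ring.inverse_mul_cancel _ (isUnit_aeval_nodal hb)]
  congr 1
  exact Finset.sum_congr rfl fun i hi => by
    rw [inverse_aeval_nodal_mul_aeval_nodal_erase hb hi]

end PartialFractions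

section MapMatrix

variable {n R S : Type*} [Fintype n] [DecidableEq n] [CommRing R] [CommRing S]

lemma isUnit_mapMatrix_iff (f : R →+* S) [IsLocalHom f] {M : Matrix n n R} :
    IsUnit (f.mapMatrix M) ↔ IsUnit M := by
  rw [isUnit_iff_isUnit_det, isUnit_iff_isUnit_det, ← f.map_det, isUnit_map_iff]

lemma mapMatrix_nonsing_inv (f : R →+* S) {M : Matrix n n R} (hM : IsUnit M) :
    f.mapMatrix M⁻¹ = (f.mapMatrix M)⁻¹ := by
  refine (inv_eq_right_inv ?_).symm
  rw [← map_mul, mul_nonsing_inv _ ((isUnit_iff_isUnit_det _).1 hM), map_one]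

lemma mapMatrix_algebraMap_aeval [Algebra R S] (M : Matrix n n R) (p : R[X]) :
    (algebraMap R S).mapMatrix (aeval M p) =
      aeval (M.map (algebraMap R S)) (p.map (algebraMap R S)) := by
  rw [aeval_map_algebraMap]
  exact (aeval_algHom_apply (Algebra.ofId R S).mapMatrix M p).symm

end MapMatrix

section FieldExtension

variable {n ι K L : Type*} [Fintype n] [DecidableEq n] [Field K] [Field L] [Algebra K L]
  {A : Matrix n n K} {q : K[X]} {s : Finset ι} {v : ι → L}

lemma isUnit_aeval_of_map_eq_nodal (hq : q.map (algebraMap K L) = Lagrange.nodal s v)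
    (hA : ∀ i ∈ s, IsUnit (A.map (algebraMap K L) - v i • (1 : Matrix n n L))) :
    IsUnit (aeval A q) := by
  simp only [← Algebra.algebraMap_eq_smul_one] at hA
  rw [← isUnit_mapMatrix_iff (algebraMap K L), mapMatrix_algebraMap_aeval, hq]
  exact isUnit_aeval_nodal hA

theorem mapMatrix_inv_aeval_mul_aeval (hq : q.map (algebraMap K L) = Lagrange.nodal s v)
    (hv : Set.InjOn v s)
    (hA : ∀ i ∈ s, IsUnit (A.map (algebraMap K L) - v i • (1 : Matrix n n L)))
    {p : K[X]} (hp : p.natDegree ≤ s.card) :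
    (algebraMap K L).mapMatrix ((aeval A q)⁻¹ * aeval A p) =
      (algebraMap K L).mapMatrix (p.coeff s.card • 1) +
        ∑ i ∈ s, simplePoleResidue (p.map (algebraMap K L)) (q.map (algebraMap K L)) (v i) •
          (A.map (algebraMap K L) - v i • (1 : Matrix n n L))⁻¹ := by
  classical
  have hunit : IsUnit (aeval A q) := isUnit_aeval_of_map_eq_nodal hq hA
  simp only [← Algebra.algebraMap_eq_smul_one] at hA ⊢
  have hcoeff : (algebraMap K L).mapMatrix (algebraMap K (Matrix n n K) (p.coeff s.card)) =
      (p.map (algebraMap K L)).coeff s.card • (1 : Matrix n n L) := by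
    rw [coeff_map, ← Algebra.algebraMap_eq_smul_one]
    exact map_algebraMap _ _ (map_zero _) rfl
  rw [map_mul, mapMatrix_nonsing_inv _ hunit, mapMatrix_algebraMap_aeval,
    mapMatrix_algebraMap_aeval, hq, hcoeff]
  simp only [nonsing_inv_eq_ringInverse]
  exact inverse_aeval_nodal_mul_aeval hv hA (natDegree_map_le.trans hp)

end FieldExtension

section Conjugation

lemma eq_add_two_smul_map_re {m n : Type*} {M N : Matrix m n ℝ} {S : Matrix m n ℂ}
    (h : M.map (algebraMap ℝ ℂ) = N.map (algebraMap ℝ ℂ) + (S + S.map (starRingEnd ℂ))) :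
    M = N + (2 : ℝ) • S.map Complex.re := by
  ext i j
  have hij := congrArg Complex.re (congrFun₂ h i j)
  simpa [two_mul] using hij

lemma map_re_mulVec {m n : Type*} [Fintype n] (M : Matrix m n ℂ) (x : n → ℝ) :
    M.map Complex.re *ᵥ x = fun i => ((M *ᵥ fun j => (x j : ℂ)) i).re := by
  ext i
  simp only [mulVec, dotProduct, Matrix.map_apply, Complex.re_sum, Complex.re_mul_ofReal]

variable {n κ : Type*} [DecidableEq n] [Fintype κ]

lemma simplePoleResidue_conj (p q : ℝ[X]) (z : ℂ) :
    simplePoleResidue (p.map (algebraMap ℝ ℂ)) (q.map (algebraMap ℝ ℂ)) (starRingEnd ℂ z) =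
      starRingEnd ℂ
        (simplePoleResidue (p.map (algebraMap ℝ ℂ)) (q.map (algebraMap ℝ ℂ)) z) := by
  simp only [simplePoleResidue, derivative_map, eval_map_algebraMap, aeval_conj, map_div₀]

lemma map_conj_sub_smul_one (A : Matrix n n ℝ) (z : ℂ) :
    (A.map (algebraMap ℝ ℂ) - z • (1 : Matrix n n ℂ)).map (starRingEnd ℂ) =
      A.map (algebraMap ℝ ℂ) - starRingEnd ℂ z • (1 : Matrix n n ℂ) := by
  ext i j
  by_cases h : i = j <;> simp [h]

variable [Fintype n]

lemma isUnit_sub_conj_smul_one {A : Matrix n n ℝ} {z : ℂ}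
    (h : IsUnit (A.map (algebraMap ℝ ℂ) - z • (1 : Matrix n n ℂ))) :
    IsUnit (A.map (algebraMap ℝ ℂ) - starRingEnd ℂ z • (1 : Matrix n n ℂ)) := by
  rw [← map_conj_sub_smul_one]
  exact h.map (starRingEnd ℂ).mapMatrix

lemma residue_conj_smul_inv_sub_conj (p q : ℝ[X]) {A : Matrix n n ℝ} {z : ℂ}
    (h : IsUnit (A.map (algebraMap ℝ ℂ) - z • (1 : Matrix n n ℂ))) :
    simplePoleResidue (p.map (algebraMap ℝ ℂ)) (q.map (algebraMap ℝ ℂ)) (starRingEnd ℂ z) •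
        (A.map (algebraMap ℝ ℂ) - starRingEnd ℂ z • (1 : Matrix n n ℂ))⁻¹ =
      (simplePoleResidue (p.map (algebraMap ℝ ℂ)) (q.map (algebraMap ℝ ℂ)) z •
        (A.map (algebraMap ℝ ℂ) - z • (1 : Matrix n n ℂ))⁻¹).map (starRingEnd ℂ) := by
  have hinv := mapMatrix_nonsing_inv (starRingEnd ℂ) h
  rw [RingHom.mapMatrix_apply, RingHom.mapMatrix_apply, map_conj_sub_smul_one] at hinv
  rw [simplePoleResidue_conj, ← hinv]
  ext i j
  simp only [Matrix.smul_apply, Matrix.map_apply, smul_eq_mul, map_mul]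

lemma sum_residue_smul_inv_conj_pairs (p q : ℝ[X]) {A : Matrix n n ℝ} {θ : κ → ℂ}
    (h : ∀ j, IsUnit (A.map (algebraMap ℝ ℂ) - θ j • (1 : Matrix n n ℂ))) :
    ∑ i, simplePoleResidue (p.map (algebraMap ℝ ℂ)) (q.map (algebraMap ℝ ℂ))
          (Sum.elim θ (starRingEnd ℂ ∘ θ) i) •
        (A.map (algebraMap ℝ ℂ) - Sum.elim θ (starRingEnd ℂ ∘ θ) i • (1 : Matrix n n ℂ))⁻¹ =
      ∑ j, simplePoleResidue (p.map (algebraMap ℝ ℂ)) (q.map (algebraMap ℝ ℂ)) (θ j) •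
          (A.map (algebraMap ℝ ℂ) - θ j • (1 : Matrix n n ℂ))⁻¹ +
        (∑ j, simplePoleResidue (p.map (algebraMap ℝ ℂ)) (q.map (algebraMap ℝ ℂ)) (θ j) •
          (A.map (algebraMap ℝ ℂ) - θ j • (1 : Matrix n n ℂ))⁻¹).map (starRingEnd ℂ) := by
  rw [Fintype.sum_sum_type, ← (starRingEnd ℂ).mapMatrix_apply, map_sum]
  exact congrArg _ (Finset.sum_congr rfl fun j _ => residue_conj_smul_inv_sub_conj p q (h j))

theorem cram_matrix_pfd_general (A : Matrix n n ℝ) (p q : ℝ[X])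
    (hp : p.natDegree ≤ 2 * Fintype.card κ) (θ : κ → ℂ)
    (hfact : q.map (algebraMap ℝ ℂ) =
      ∏ j, ((X - C (θ j)) * (X - C (starRingEnd ℂ (θ j)))))
    (hinj : Function.Injective θ)
    (hdistinct : ∀ i j, θ i ≠ starRingEnd ℂ (θ j))
    (hinv : ∀ j, IsUnit (A.map (algebraMap ℝ ℂ) - θ j • (1 : Matrix n n ℂ))) :
    (∀ j, IsUnit (A.map (algebraMap ℝ ℂ) - starRingEnd ℂ (θ j) • (1 : Matrix n n ℂ))) ∧
    IsUnit (aeval A q) ∧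
    (aeval A q)⁻¹ * aeval A p =
      p.coeff (2 * Fintype.card κ) • 1 +
        (2 : ℝ) • (∑ j, simplePoleResidue (p.map (algebraMap ℝ ℂ)) (q.map (algebraMap ℝ ℂ)) (θ j) •
          (A.map (algebraMap ℝ ℂ) - θ j • (1 : Matrix n n ℂ))⁻¹).map Complex.re := by
  have hinv_conj := fun j => isUnit_sub_conj_smul_one (hinv j)
  have hv : Function.Injective (Sum.elim θ (starRingEnd ℂ ∘ θ)) :=
    hinj.sumElim ((starRingEnd ℂ).injective.comp hinj) hdistinct
  have hA : ∀ i ∈ Finset.univ, IsUnit (A.map (algebraMap ℝ ℂ) -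
      Sum.elim θ (starRingEnd ℂ ∘ θ) i • (1 : Matrix n n ℂ)) :=
    fun i _ => i.casesOn hinv hinv_conj
  have hcard : (Finset.univ : Finset (κ ⊕ κ)).card = 2 * Fintype.card κ := by
    rw [Finset.card_univ, Fintype.card_sum, two_mul]
  have hnodal : q.map (algebraMap ℝ ℂ) =
      Lagrange.nodal Finset.univ (Sum.elim θ (starRingEnd ℂ ∘ θ)) :=
    hfact.trans (nodal_sumElim θ (starRingEnd ℂ ∘ θ)).symm
  refine ⟨hinv_conj, isUnit_aeval_of_map_eq_nodal hnodal hA, eq_add_two_smul_map_re ?_⟩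
  have hpfd := mapMatrix_inv_aeval_mul_aeval hnodal hv.injOn hA (hp.trans_eq hcard.symm)
  rw [sum_residue_smul_inv_conj_pairs p q hinv, hcard] at hpfd
  exact hpfd

end Conjugation

/-- Partial fraction evaluation of the rational matrix function `q(A)⁻¹ p(A)` applied to a
real vector, folded over the conjugate pairs of poles. -/
theorem cram_matrix_pfd (n m : ℕ) (A : Matrix (Fin n) (Fin n) ℝ) (x₀ : Fin n → ℝ)
    (p q : Polynomial ℝ) (hq : q.Monic) (hqdeg : q.natDegree = 2 * m)
    (hp : p.natDegree ≤ 2 * m) (θ : Fin m → ℂ)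
    (hfact : q.map (algebraMap ℝ ℂ) =
      ∏ j : Fin m, ((X - C (θ j)) * (X - C (starRingEnd ℂ (θ j)))))
    (hinj : Function.Injective θ)
    (hdistinct : ∀ i j, θ i ≠ starRingEnd ℂ (θ j))
    (hinv : ∀ j, IsUnit (A.map (algebraMap ℝ ℂ) - θ j • (1 : Matrix (Fin n) (Fin n) ℂ))) :
    (∀ j, IsUnit (A.map (algebraMap ℝ ℂ) -
        starRingEnd ℂ (θ j) • (1 : Matrix (Fin n) (Fin n) ℂ))) ∧
    IsUnit (aeval A q) ∧
    (aeval A q)⁻¹ *ᵥ ((aeval A p) *ᵥ x₀) = fun i =>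
      p.coeff (2 * m) * x₀ i +
      2 * ((∑ j : Fin m,
        ((p.map (algebraMap ℝ ℂ)).eval (θ j) /
            (derivative (q.map (algebraMap ℝ ℂ))).eval (θ j)) •
          ((A.map (algebraMap ℝ ℂ) - θ j • 1)⁻¹ *ᵥ fun i' => (x₀ i' : ℂ))) i).re := by
  obtain ⟨hinv_conj, hq_unit, hpfd⟩ := cram_matrix_pfd_general A p q
    (by simpa only [Fintype.card_fin] using hp) θ hfact hinj hdistinct hinv
  refine ⟨hinv_conj, hq_unit, ?_⟩
  rw [mulVec_mulVec, hpfd, add_mulVec, smul_mulVec, smul_mulVec, one_mulVec, map_re_mulVec,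
    Fintype.card_fin]
  simp only [sum_mulVec, smul_mulVec, simplePoleResidue]
  rfl
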